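/- There exists K ∈ ℕ such that for all integers k ≥ K, q^{−k−1+α_{k+1}^{(ν)}} < j_{kν}/q < j_{k+1,ν}, where α_{k+1}^{(ν)} = ln(1 − q^{2(k+1+ν)}/(1 − q^{2(k+1)}))/(2 ln q). -/

import Mathlib

/-!
Put `p = q²`, `a = q^(2(ν+1))`, `x = z²`; up to a nonvanishing factor `J_ν(z;q²)` is the entire
function `F x = besselF p a x`, with positive zeros `X n = (j n)²`. The claim becomes
`1 - a p^n / (1 - p^(n+1)) < p^n X n` and `X n < p X (n+1)` for large `n`; the given bounds on the
zeros are used only through `p < p^n X n < 1`, so that `X n` is the only zero in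
`[p^(1-n), p^(-n)]`.

*Signs.* With Euler's series `E` (which is `(·;p)_∞`), exchanging sums gives
`E a * F x = ∑ (-1)^k e_k a^k E (p^(k+1) x)`, where `e_k = p^(k(k-1)/2) / (p;p)_k`
(`hasSum_transform`). At `x = y p^(-n)` with `p < y ≤ 1` the terms with `k ≥ n` form an alternating
series of decreasing terms beginning with sign `(-1)^n`, while those with `k < n` all have sign
`(-1)^(n-1)`, or vanish if `y = 1`. Hence `F (p^(-n))` has sign `(-1)^n`, whereas for
`y = 1 - a p^n / (1 - p^(n+1))` the term `k = n - 2` already dominates the tail and the sign is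
`(-1)^(n-1)` (`eventually_signs`). The intermediate value theorem places a zero, necessarily `X n`,
between the two points: this is the first inequality.

*Monotonicity.* The difference equation `p F x = (p + a - p² x) F (p x) - a F (p² x)` at
`x = X (n+1) / p` shows that `F (X (n+1) / p)` and `F (p X (n+1))` have opposite signs. If
`X n < p X (n+1)`, then `F (p X (n+1))` has the sign of `F (p^(-n))`, and the sign of
`F (X (n+1) / p)` forces `X (n+1) / p < X (n+2)`. So the second inequality propagates from `n` to
`n + 1`. If it failed for all large `n`, then `p^n X n` would be eventually nonincreasing and less
than `1`, contradicting `p^n X n → 1`, which follows from the first inequality (`zeros_core`).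
-/

open Filter

/-- The finite q-shifted factorial `(a;q)_n`. -/
noncomputable def qPoch (a q : ℝ) : ℕ → ℝ := fun n => ∏ j ∈ Finset.range n, (1 - a * q ^ j)

/-- The infinite q-shifted factorial `(a;q)_∞`. -/
noncomputable def qPochInf (a q : ℝ) : ℝ := ∏' j : ℕ, (1 - a * q ^ j)

/-- The third Jackson (Hahn–Exton) q-Bessel function `J_ν(z;q²)` (base `q²`). -/
noncomputable def qBessel (ν q z : ℝ) : ℝ :=
  z ^ ν * (qPochInf (q ^ (2 * (ν + 1))) (q ^ 2) / qPochInf (q ^ 2) (q ^ 2)) *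
    ∑' k : ℕ, ((-1 : ℝ) ^ k * q ^ (k * (k + 1)) * z ^ (2 * k) /
      (qPoch (q ^ (2 * (ν + 1))) (q ^ 2) k * qPoch (q ^ 2) (q ^ 2) k))

/-- The coefficients `p^(k(k-1)/2) / (p;p)_k` of Euler's `q`-exponential series, as a product of
consecutive ratios. -/
noncomputable def eulerCoeff (p : ℝ) (k : ℕ) : ℝ :=
  ∏ i ∈ Finset.range k, (p ^ i / (1 - p ^ (i + 1)))

/-- Euler's series `∑ (-1)^k p^(k(k-1)/2) z^k / (p;p)_k`, which equals `(z;p)_∞`. Only the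
functional equation `E z = (1 - z) E (p z)` is used, not the product formula. -/
noncomputable def eulerE (p z : ℝ) : ℝ := ∑' k : ℕ, (-1 : ℝ) ^ k * eulerCoeff p k * z ^ k

/-- The series part of the Hahn–Exton function in the variable `x = z²`, with `p = q²` and
`a = q^(2(ν+1))`. -/
noncomputable def besselF (p a x : ℝ) : ℝ :=
  ∑' k : ℕ, (-1 : ℝ) ^ k * eulerCoeff p k * (p * x) ^ k / qPoch a p k

/-! ### Euler's series, the difference equation and the transformation formula -/

section Series

variable {p a : ℝ}

lemma one_sub_pow_succ_pos (hp0 : 0 < p) (hp1 : p < 1) (k : ℕ) : 0 < 1 - p ^ (k + 1) := by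
  have := pow_lt_one₀ hp0.le hp1 (Nat.succ_ne_zero k)
  simpa using this

lemma eulerCoeff_succ (k : ℕ) :
    eulerCoeff p (k + 1) = eulerCoeff p k * (p ^ k / (1 - p ^ (k + 1))) := by
  rw [eulerCoeff, eulerCoeff, Finset.prod_range_succ]

lemma eulerCoeff_pos (hp0 : 0 < p) (hp1 : p < 1) (k : ℕ) : 0 < eulerCoeff p k :=
  Finset.prod_pos fun i _ => div_pos (pow_pos hp0 _) (one_sub_pow_succ_pos hp0 hp1 i)

lemma qPoch_succ (k : ℕ) : qPoch a p (k + 1) = qPoch a p k * (1 - a * p ^ k) := by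
  simp [qPoch, Finset.prod_range_succ]

lemma one_sub_mul_pow_pos (hp0 : 0 < p) (hp1 : p < 1) (ha0 : 0 < a) (ha1 : a < 1) (k : ℕ) :
    0 < 1 - a * p ^ k := by
  have h1 : p ^ k ≤ 1 := pow_le_one₀ hp0.le hp1.le
  nlinarith

lemma qPoch_pos (hp0 : 0 < p) (hp1 : p < 1) (ha0 : 0 < a) (ha1 : a < 1) (k : ℕ) :
    0 < qPoch a p k :=
  Finset.prod_pos fun i _ => one_sub_mul_pow_pos hp0 hp1 ha0 ha1 i

/-- Ratio test for coefficients whose consecutive ratios tend to zero. -/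
lemma summable_abs_of_ratio {c r : ℕ → ℝ} (hc : ∀ k, c k ≠ 0)
    (hr : ∀ k, c (k + 1) = c k * r k) (hr0 : Tendsto r atTop (nhds 0)) (z : ℝ) :
    Summable fun k => |c k| * |z| ^ k := by
  rcases eq_or_ne z 0 with rfl | hz
  · apply summable_of_ne_finset_zero (s := {0})
    intro b hb
    have : b ≠ 0 := by simpa using hb
    simp [this]
  · refine summable_of_ratio_test_tendsto_lt_one (l := 0) zero_lt_one
      (Eventually.of_forall fun k => by simp [hc k, hz]) ?_
    have h : Tendsto (fun k => |r k| * |z|) atTop (nhds 0) := by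
      simpa using (hr0.abs).mul_const |z|
    refine h.congr fun k => ?_
    have h1 : |c k| ≠ 0 := abs_ne_zero.mpr (hc k)
    have h2 : |z| ≠ 0 := abs_ne_zero.mpr hz
    simp only [Real.norm_eq_abs, abs_mul, abs_pow, abs_abs, hr k, pow_succ]
    field_simp

lemma continuous_power_series {c : ℕ → ℝ} (hc : ∀ z : ℝ, Summable fun k => |c k| * |z| ^ k) :
    Continuous fun x : ℝ => ∑' k, c k * x ^ k := by
  rw [continuous_iff_continuousAt]
  intro x
  have h : ContinuousOn (fun x : ℝ => ∑' k, c k * x ^ k) (Metric.ball 0 (|x| + 1)) := by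
    refine continuousOn_tsum (fun k => by fun_prop) (hc (|x| + 1)) ?_
    intro k y hy
    have hy' : |y| < |x| + 1 := by simpa using hy
    rw [norm_mul, norm_pow, Real.norm_eq_abs, Real.norm_eq_abs,
      abs_of_pos (a := |x| + 1) (by positivity)]
    gcongr
  exact h.continuousAt (Metric.isOpen_ball.mem_nhds (by simp))

lemma summable_of_abs {c : ℕ → ℝ} {z : ℝ} (h : Summable fun k => |c k| * |z| ^ k) :
    Summable fun k => c k * z ^ k := by
  refine Summable.of_abs (h.congr fun k => by rw [abs_mul, abs_pow])

lemma tendsto_ratio (hp0 : 0 < p) (hp1 : p < 1) :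
    Tendsto (fun k : ℕ => p ^ k / (1 - p ^ (k + 1))) atTop (nhds 0) := by
  have h := tendsto_pow_atTop_nhds_zero_of_lt_one hp0.le hp1
  have h2 := (tendsto_add_atTop_iff_nat 1).mpr h
  have := h.div (h2.const_sub 1) (by simp)
  rw [sub_zero, zero_div] at this
  exact this

lemma tendsto_one_sub_ratio (hp0 : 0 < p) (hp1 : p < 1) :
    Tendsto (fun n : ℕ => 1 - a * p ^ n / (1 - p ^ (n + 1))) atTop (nhds 1) := by
  have := ((tendsto_ratio hp0 hp1).const_mul a).const_sub 1
  simp only [mul_zero, sub_zero] at this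
  exact this.congr fun n => by rw [mul_div_assoc]

lemma eulerE_summable_abs (hp0 : 0 < p) (hp1 : p < 1) (z : ℝ) :
    Summable fun k => |(-1 : ℝ) ^ k * eulerCoeff p k| * |z| ^ k := by
  refine summable_abs_of_ratio (r := fun k => -(p ^ k / (1 - p ^ (k + 1))))
    (fun k => by simp [(eulerCoeff_pos hp0 hp1 k).ne']) (fun k => ?_) ?_ z
  · rw [eulerCoeff_succ, pow_succ]; ring
  · simpa using (tendsto_ratio hp0 hp1).neg

lemma eulerE_summable (hp0 : 0 < p) (hp1 : p < 1) (z : ℝ) :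
    Summable fun k => (-1 : ℝ) ^ k * eulerCoeff p k * z ^ k :=
  summable_of_abs (eulerE_summable_abs hp0 hp1 z)

lemma eulerE_continuous (hp0 : 0 < p) (hp1 : p < 1) : Continuous (eulerE p) :=
  continuous_power_series (eulerE_summable_abs hp0 hp1)

lemma eulerE_zero : eulerE p 0 = 1 := by
  unfold eulerE
  rw [tsum_eq_single 0 (by intro b hb; simp [hb])]
  simp [eulerCoeff]

lemma eulerE_eq (hp0 : 0 < p) (hp1 : p < 1) (z : ℝ) :
    eulerE p z = (1 - z) * eulerE p (p * z) := by
  have h1 := eulerE_summable hp0 hp1 z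
  have h2 := eulerE_summable hp0 hp1 (p * z)
  have h3 : eulerE p z - eulerE p (p * z) = -z * eulerE p (p * z) := by
    unfold eulerE
    rw [← h1.tsum_sub h2, ← tsum_mul_left, (h1.sub h2).tsum_eq_zero_add]
    simp only [pow_zero, sub_self, zero_add]
    refine tsum_congr fun k => ?_
    have := (one_sub_pow_succ_pos hp0 hp1 k).ne'
    rw [eulerCoeff_succ, mul_pow, mul_pow]
    field_simp
    ring
  linarith

lemma eulerE_pos (hp0 : 0 < p) (hp1 : p < 1) {z : ℝ} (hz0 : 0 ≤ z) (hz : z < 1) :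
    0 < eulerE p z := by
  have hlim : Tendsto (fun n : ℕ => eulerE p (p ^ n * z)) atTop (nhds 1) := by
    have h : Tendsto (fun n : ℕ => p ^ n * z) atTop (nhds 0) := by
      simpa using (tendsto_pow_atTop_nhds_zero_of_lt_one hp0.le hp1).mul_const z
    have := ((eulerE_continuous hp0 hp1).tendsto 0).comp h
    rwa [eulerE_zero] at this
  obtain ⟨n, hn⟩ := (hlim.eventually (lt_mem_nhds one_pos)).exists
  have key : ∀ n : ℕ, 0 < eulerE p (p ^ n * z) → 0 < eulerE p z := by
    intro n
    induction n with
    | zero => simp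
    | succ n ih =>
      intro h
      apply ih
      rw [eulerE_eq hp0 hp1]
      have h1 : p ^ n ≤ 1 := pow_le_one₀ hp0.le hp1.le
      have h2 : 0 ≤ p ^ n := by positivity
      refine mul_pos (by nlinarith) ?_
      rwa [← mul_assoc, ← pow_succ']
  exact key n hn

lemma eulerE_qPoch (hp0 : 0 < p) (hp1 : p < 1) (m : ℕ) :
    eulerE p a = qPoch a p m * eulerE p (a * p ^ m) := by
  induction m with
  | zero => simp [qPoch]
  | succ m ih =>
    rw [ih, eulerE_eq hp0 hp1 (a * p ^ m), qPoch_succ, pow_succ]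
    ring_nf

/-- The power-series coefficients of `besselF`. -/
noncomputable def besselCoeff (p a : ℝ) (k : ℕ) : ℝ :=
  (-1 : ℝ) ^ k * eulerCoeff p k * p ^ k / qPoch a p k

lemma besselF_eq_tsum (x : ℝ) : besselF p a x = ∑' k, besselCoeff p a k * x ^ k := by
  unfold besselF besselCoeff
  refine tsum_congr fun k => ?_
  rw [mul_pow]; ring

lemma besselCoeff_succ (k : ℕ) : besselCoeff p a (k + 1) =
    besselCoeff p a k * (-(p ^ k / (1 - p ^ (k + 1)) * (p / (1 - a * p ^ k)))) := by
  unfold besselCoeff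
  rw [eulerCoeff_succ, qPoch_succ, pow_succ, pow_succ p k]
  simp only [div_eq_mul_inv, mul_inv]
  ring

lemma besselF_summable_abs (hp0 : 0 < p) (hp1 : p < 1) (ha0 : 0 < a) (ha1 : a < 1) (z : ℝ) :
    Summable fun k => |besselCoeff p a k| * |z| ^ k := by
  refine summable_abs_of_ratio (fun k => ?_) besselCoeff_succ ?_ z
  · simp [besselCoeff, (eulerCoeff_pos hp0 hp1 k).ne', (qPoch_pos hp0 hp1 ha0 ha1 k).ne', hp0.ne']
  · have h := tendsto_pow_atTop_nhds_zero_of_lt_one hp0.le hp1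
    have h2 : Tendsto (fun k : ℕ => p / (1 - a * p ^ k)) atTop (nhds (p / (1 - a * 0))) :=
      tendsto_const_nhds.div ((h.const_mul a).const_sub 1) (by simp)
    simpa using ((tendsto_ratio hp0 hp1).mul h2).neg

lemma besselF_summable (hp0 : 0 < p) (hp1 : p < 1) (ha0 : 0 < a) (ha1 : a < 1) (z : ℝ) :
    Summable fun k => besselCoeff p a k * z ^ k :=
  summable_of_abs (besselF_summable_abs hp0 hp1 ha0 ha1 z)

lemma besselF_continuous (hp0 : 0 < p) (hp1 : p < 1) (ha0 : 0 < a) (ha1 : a < 1) :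
    Continuous (besselF p a) := by
  have h := continuous_power_series (besselF_summable_abs hp0 hp1 ha0 ha1)
  have h2 : besselF p a = fun x => ∑' k, besselCoeff p a k * x ^ k := funext besselF_eq_tsum
  rwa [h2]

/-- The second-order `p`-difference equation of the Hahn–Exton function. -/
lemma besselF_eq (hp0 : 0 < p) (hp1 : p < 1) (ha0 : 0 < a) (ha1 : a < 1) (x : ℝ) :
    p * besselF p a x =
      (p + a - p ^ 2 * x) * besselF p a (p * x) - a * besselF p a (p ^ 2 * x) := by
  have h1 := (besselF_summable hp0 hp1 ha0 ha1 x).mul_left p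
  have h2 := (besselF_summable hp0 hp1 ha0 ha1 (p * x)).mul_left (p + a)
  have h3 := (besselF_summable hp0 hp1 ha0 ha1 (p ^ 2 * x)).mul_left a
  have h : p * besselF p a x - (p + a) * besselF p a (p * x) + a * besselF p a (p ^ 2 * x) =
      (-p ^ 2 * x) * besselF p a (p * x) := by
    simp only [besselF_eq_tsum, ← tsum_mul_left]
    rw [← h1.tsum_sub h2, ← (h1.sub h2).tsum_add h3, ((h1.sub h2).add h3).tsum_eq_zero_add]
    rw [show ∀ A B : ℝ, A = 0 → A + B = B from fun A B h => by rw [h, zero_add]]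
    · refine tsum_congr fun k => ?_
      have e1 := (one_sub_pow_succ_pos hp0 hp1 k).ne'
      have e2 := (one_sub_mul_pow_pos hp0 hp1 ha0 ha1 k).ne'
      rw [besselCoeff_succ]
      generalize besselCoeff p a k = c
      have e3 : (p ^ 2 * x) ^ (k + 1) = (p ^ k) ^ 2 * p ^ 2 * x ^ k * x := by ring
      rw [e3, mul_pow, mul_pow]
      rw [mul_comm a] at e2
      rw [mul_comm a (p ^ k)]
      field_simp
      ring
    · simp; ring
  linarith

/-- The transformation `(a;p)_∞ ₁φ₁(0;a;p,px) = (px;p)_∞ ₁φ₁(0;px;p,a)`: expand both sides by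
Euler's series and exchange the order of summation. -/
lemma hasSum_transform (hp0 : 0 < p) (hp1 : p < 1) (ha0 : 0 < a) (ha1 : a < 1) (x : ℝ) :
    HasSum (fun k : ℕ => (-1 : ℝ) ^ k * eulerCoeff p k * a ^ k * eulerE p (p ^ (k + 1) * x))
      (eulerE p a * besselF p a x) := by
  let f : ℕ → ℕ → ℝ := fun k m =>
    ((-1 : ℝ) ^ k * eulerCoeff p k * a ^ k) * ((-1 : ℝ) ^ m * eulerCoeff p m * (p * x) ^ m) *
      p ^ (k * m)
  have hs : Summable (Function.uncurry f) := by
    have h1 := (eulerE_summable hp0 hp1 a).norm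
    have h2 := (eulerE_summable hp0 hp1 (p * x)).norm
    refine Summable.of_norm_bounded
      (h1.mul_of_nonneg h2 (fun _ => norm_nonneg _) (fun _ => norm_nonneg _)) ?_
    rintro ⟨k, m⟩
    simp only [Function.uncurry, f]
    rw [norm_mul, norm_mul]
    refine mul_le_of_le_one_right (by positivity) ?_
    rw [Real.norm_of_nonneg (by positivity)]
    exact pow_le_one₀ hp0.le hp1.le
  have e1 : ∀ k, ∑' m, f k m =
      (-1 : ℝ) ^ k * eulerCoeff p k * a ^ k * eulerE p (p ^ (k + 1) * x) := by
    intro k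
    unfold eulerE
    rw [← tsum_mul_left]
    refine tsum_congr fun m => ?_
    simp only [f]
    rw [show p ^ (k + 1) * x = p ^ k * (p * x) by ring, mul_pow (p ^ k), ← pow_mul]
    ring
  have e2 : ∀ m, ∑' k, f k m =
      eulerE p a * ((-1 : ℝ) ^ m * eulerCoeff p m * (p * x) ^ m / qPoch a p m) := by
    intro m
    rw [eulerE_qPoch hp0 hp1 m]
    have := (qPoch_pos hp0 hp1 ha0 ha1 m).ne'
    have e : ∀ A B C : ℝ, C ≠ 0 → C * A * (B / C) = B * A := by
      intro A B C hC; field_simp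
    rw [e _ _ _ this]
    unfold eulerE
    rw [← tsum_mul_left]
    refine tsum_congr fun k => ?_
    simp only [f]
    rw [mul_pow a, ← pow_mul p m k, mul_comm m k]
    ring
  have hsum : Summable fun k => ∑' m, f k m := hs.prod
  have hval : ∑' k, ∑' m, f k m = eulerE p a * besselF p a x := by
    rw [← hs.tsum_comm]
    simp only [e2]
    rw [tsum_mul_left, besselF]
  have := hsum.hasSum
  rw [hval] at this
  simpa only [e1] using this

end Series

/-! ### Signs of `besselF` at and just to the left of `p^(-n)` -/

section Signs

variable {p a : ℝ}

/-- Splitting of the transformed series at `x = y / p^n`: the terms of index `k ≥ n` form an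
alternating series with strictly decreasing terms. -/
lemma transform_split (hp0 : 0 < p) (hp1 : p < 1) (ha0 : 0 < a) (ha1 : a < 1) {y : ℝ}
    (hy0 : 0 < y) (hy1 : y ≤ 1) (n : ℕ) (hn : p ^ n < (1 - p) ^ 2) :
    ∃ T : ℝ, 0 < T ∧ T ≤ eulerCoeff p n * a ^ n * eulerE p (p * y) ∧
      eulerE p a * besselF p a (y / p ^ n) =
        ∑ k ∈ Finset.range n,
          (-1 : ℝ) ^ k * eulerCoeff p k * a ^ k * eulerE p (p ^ (k + 1) * (y / p ^ n)) +
        (-1) ^ n * T := by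
  set t : ℕ → ℝ := fun l => eulerCoeff p (n + l) * a ^ (n + l) * eulerE p (p ^ (l + 1) * y)
    with ht
  have hpy : ∀ l : ℕ, p ^ (l + 1) * y ≤ p := by
    intro l
    have h1 : p ^ l ≤ 1 := pow_le_one₀ hp0.le hp1.le
    have h2 : p ^ l * y ≤ 1 := mul_le_one₀ h1 hy0.le hy1
    calc p ^ (l + 1) * y = p * (p ^ l * y) := by ring
      _ ≤ p * 1 := by gcongr
      _ = p := mul_one p
  have hE : ∀ l : ℕ, 0 < eulerE p (p ^ (l + 1) * y) := fun l =>
    eulerE_pos hp0 hp1 (by positivity) ((hpy l).trans_lt hp1)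
  have htpos : ∀ l, 0 < t l := fun l =>
    mul_pos (mul_pos (eulerCoeff_pos hp0 hp1 _) (pow_pos ha0 _)) (hE l)
  have hstep : ∀ l, t (l + 1) < t l := by
    intro l
    have e1 : eulerE p (p ^ (l + 1) * y) =
        (1 - p ^ (l + 1) * y) * eulerE p (p ^ (l + 1 + 1) * y) := by
      rw [eulerE_eq hp0 hp1]; congr 2; ring
    have hd : 0 < 1 - p ^ (n + l + 1) := one_sub_pow_succ_pos hp0 hp1 _
    have hd1 : 1 - p ≤ 1 - p ^ (n + l + 1) := by
      have : p ^ (n + l + 1) ≤ p := pow_le_of_le_one hp0.le hp1.le (by omega)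
      linarith
    have hd2 : 1 - p ≤ 1 - p ^ (l + 1) * y := by linarith [hpy l]
    have hc : p ^ (n + l) * a < (1 - p ^ (n + l + 1)) * (1 - p ^ (l + 1) * y) := by
      have h1 : p ^ (n + l) ≤ p ^ n := pow_le_pow_of_le_one hp0.le hp1.le (by omega)
      have h2 : 0 < p ^ (n + l) := by positivity
      have h3 : (1 - p) * (1 - p) ≤ (1 - p ^ (n + l + 1)) * (1 - p ^ (l + 1) * y) :=
        mul_le_mul hd1 hd2 (by linarith) hd.le
      nlinarith
    have hc' : p ^ (n + l) / (1 - p ^ (n + l + 1)) * a < 1 - p ^ (l + 1) * y := by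
      rw [div_mul_eq_mul_div, div_lt_iff₀ hd]; linarith
    have hpos : 0 < eulerCoeff p (n + l) * a ^ (n + l) * eulerE p (p ^ (l + 1 + 1) * y) :=
      mul_pos (mul_pos (eulerCoeff_pos hp0 hp1 _) (pow_pos ha0 _)) (hE (l + 1))
    calc t (l + 1) = eulerCoeff p (n + l) * a ^ (n + l) * eulerE p (p ^ (l + 1 + 1) * y) *
          (p ^ (n + l) / (1 - p ^ (n + l + 1)) * a) := by
          simp only [ht]
          rw [show n + (l + 1) = n + l + 1 by ring, eulerCoeff_succ, pow_succ a]
          ring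
      _ < eulerCoeff p (n + l) * a ^ (n + l) * eulerE p (p ^ (l + 1 + 1) * y) *
          (1 - p ^ (l + 1) * y) := mul_lt_mul_of_pos_left hc' hpos
      _ = t l := by simp only [ht]; rw [e1]; ring
  have hanti : Antitone t := antitone_nat_of_succ_le fun l => (hstep l).le
  have hS := hasSum_transform hp0 hp1 ha0 ha1 (y / p ^ n)
  have hS' := (hasSum_nat_add_iff' n).mpr hS
  have hS2 := hS'.mul_left ((-1 : ℝ) ^ n)
  have hsq : ((-1 : ℝ) ^ n) * (-1) ^ n = 1 := by rw [← mul_pow]; simp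
  have hterm : ∀ l : ℕ, (-1 : ℝ) ^ n * ((-1 : ℝ) ^ (l + n) * eulerCoeff p (l + n) * a ^ (l + n) *
      eulerE p (p ^ (l + n + 1) * (y / p ^ n))) = (-1) ^ l * t l := by
    intro l
    have : p ^ (l + n + 1) * (y / p ^ n) = p ^ (l + 1) * y := by
      have : p ^ n ≠ 0 := by positivity
      field_simp
      ring
    rw [this, pow_add (-1 : ℝ) l n, add_comm l n]
    simp only [ht]
    linear_combination ((-1 : ℝ) ^ l * eulerCoeff p (n + l) * a ^ (n + l) *
      eulerE p (p ^ (l + 1) * y)) * hsq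
  simp only [hterm] at hS2
  have hlim := hS2.tendsto_sum_nat
  have hlow := hanti.alternating_series_le_tendsto hlim 1
  have hup := hanti.tendsto_le_alternating_series hlim 0
  simp only [mul_one, Finset.sum_range_succ, Finset.sum_range_zero, mul_zero, zero_add, pow_zero,
    one_mul, pow_one] at hlow hup
  refine ⟨_, ?_, hup.trans (by simp [ht]), ?_⟩
  · have := hstep 0
    rw [zero_add] at this
    linarith
  · rw [← mul_assoc, hsq, one_mul, add_sub_cancel]

lemma eulerE_inv_pow (hp0 : 0 < p) (hp1 : p < 1) (i : ℕ) : eulerE p (1 / p ^ i) = 0 := by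
  induction i with
  | zero => rw [eulerE_eq hp0 hp1]; simp
  | succ i ih =>
    rw [eulerE_eq hp0 hp1, show p * (1 / p ^ (i + 1)) = 1 / p ^ i by field_simp; ring, ih, mul_zero]

lemma eulerE_sign (hp0 : 0 < p) (hp1 : p < 1) {y : ℝ} (hy0 : p < y) (hy1 : y < 1) (i : ℕ) :
    0 ≤ (-1) ^ i * eulerE p (y / p ^ i) := by
  induction i with
  | zero => simpa using (eulerE_pos hp0 hp1 (by linarith) hy1).le
  | succ i ih =>
    rw [eulerE_eq hp0 hp1, show p * (y / p ^ (i + 1)) = y / p ^ i by field_simp; ring, pow_succ]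
    have h : 1 ≤ y / p ^ (i + 1) := by
      rw [le_div_iff₀ (by positivity), one_mul]
      exact (pow_le_of_le_one hp0.le hp1.le (by omega)).trans hy0.le
    have := mul_nonneg (sub_nonneg.mpr h) ih
    linarith

/-- At `x = p^(-n)` all terms of index `k < n` of the transformed series vanish. -/
lemma besselF_sign_right (hp0 : 0 < p) (hp1 : p < 1) (ha0 : 0 < a) (ha1 : a < 1) (n : ℕ)
    (hn : p ^ n < (1 - p) ^ 2) : 0 < (-1) ^ n * besselF p a (1 / p ^ n) := by
  obtain ⟨T, hT, -, h⟩ := transform_split hp0 hp1 ha0 ha1 one_pos le_rfl n hn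
  have hz : ∀ k ∈ Finset.range n, (-1 : ℝ) ^ k * eulerCoeff p k * a ^ k *
      eulerE p (p ^ (k + 1) * (1 / p ^ n)) = 0 := by
    intro k hk
    obtain ⟨i, rfl⟩ := Nat.exists_eq_add_of_le (Finset.mem_range.mp hk)
    have : p ^ (k + 1) * (1 / p ^ (k.succ + i)) = 1 / p ^ i := by
      rw [Nat.succ_eq_add_one]; field_simp; ring
    rw [this, eulerE_inv_pow hp0 hp1, mul_zero]
  rw [Finset.sum_eq_zero hz, zero_add] at h
  have hE := eulerE_pos hp0 hp1 ha0.le ha1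
  have hsq : ((-1 : ℝ) ^ n) * (-1) ^ n = 1 := by rw [← mul_pow]; simp
  have : eulerE p a * ((-1) ^ n * besselF p a (1 / p ^ n)) = T := by
    linear_combination (-1 : ℝ) ^ n * h + T * hsq
  exact pos_of_mul_pos_right (this ▸ hT) hE.le

/-- For `p < y < 1` all terms of index `k < n = m + 2` of the transformed series at `y / p^n` have
sign `(-1)^(n-1)`, and the one of index `n - 2` alone outweighs the tail, provided `1 - y` is at
least of the order `a p^n`. -/
lemma besselF_sign_left (hp0 : 0 < p) (hp1 : p < 1) (ha0 : 0 < a) (ha1 : a < 1) {y : ℝ}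
    (hy0 : p < y) (m : ℕ) (hy1 : a * p ^ (m + 2) ≤ 1 - y)
    (hn : p ^ (m + 2) < (1 - p) ^ 2)
    (hm : a * p ^ m < (y - p) * ((1 - p ^ (m + 1)) * (1 - p ^ (m + 2)))) :
    (-1) ^ (m + 2) * besselF p a (y / p ^ (m + 2)) < 0 := by
  have hap : 0 < a * p ^ (m + 2) := by positivity
  have hy : y < 1 := by linarith
  have hypos : 0 < y := hp0.trans hy0
  obtain ⟨T, -, hT, h⟩ := transform_split hp0 hp1 ha0 ha1 hypos hy.le (m + 2) hn
  have hsq : ((-1 : ℝ) ^ (m + 2)) * (-1) ^ (m + 2) = 1 := by rw [← mul_pow]; simp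
  have hneg : ∀ k ∈ Finset.range (m + 2), 0 ≤ -((-1 : ℝ) ^ (m + 2) * ((-1 : ℝ) ^ k *
      eulerCoeff p k * a ^ k * eulerE p (p ^ (k + 1) * (y / p ^ (m + 2))))) := by
    intro k hk
    obtain ⟨i, hi⟩ := Nat.exists_eq_add_of_le (Finset.mem_range.mp hk)
    have e : p ^ (k + 1) * (y / p ^ (m + 2)) = y / p ^ i := by
      rw [hi, Nat.succ_eq_add_one]; field_simp; ring
    have h1 := eulerE_sign hp0 hp1 hy0 hy i
    have h2 : 0 < eulerCoeff p k * a ^ k := mul_pos (eulerCoeff_pos hp0 hp1 _) (pow_pos ha0 _)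
    have hsk : ((-1 : ℝ) ^ k) * (-1) ^ k = 1 := by rw [← mul_pow]; simp
    have e2 : (-1 : ℝ) ^ (m + 2) = -((-1) ^ k * (-1) ^ i) := by
      rw [hi, pow_add, Nat.succ_eq_add_one, pow_succ]; ring
    rw [e, e2]
    have := mul_nonneg h2.le h1
    linear_combination this + (-eulerCoeff p k * a ^ k * ((-1) ^ i * eulerE p (y / p ^ i))) * hsk
  have hle := Finset.single_le_sum hneg (Finset.mem_range.mpr (show m < m + 2 by omega))
  rw [Finset.sum_neg_distrib, ← Finset.mul_sum] at hle
  have e3 : eulerE p (p ^ (m + 1) * (y / p ^ (m + 2))) =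
      (1 - y / p) * ((1 - y) * eulerE p (p * y)) := by
    rw [show p ^ (m + 1) * (y / p ^ (m + 2)) = y / p by field_simp; ring, eulerE_eq hp0 hp1,
      show p * (y / p) = y by field_simp, eulerE_eq hp0 hp1 y]
  have e4 : ((-1 : ℝ) ^ (m + 2)) * (-1) ^ m = 1 := by
    rw [← pow_add, show m + 2 + m = 2 * (m + 1) by ring, pow_mul]; simp
  have hEy : 0 < eulerE p (p * y) := eulerE_pos hp0 hp1 (by positivity) (by nlinarith)
  have hc : 0 < eulerCoeff p m * a ^ m * eulerE p (p * y) :=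
    mul_pos (mul_pos (eulerCoeff_pos hp0 hp1 _) (pow_pos ha0 _)) hEy
  have d1 := one_sub_pow_succ_pos hp0 hp1 m
  have d2 := one_sub_pow_succ_pos hp0 hp1 (m + 1)
  rw [show m + 1 + 1 = m + 2 by ring] at d2
  have hkey : p ^ m / (1 - p ^ (m + 1)) * (p ^ (m + 1) / (1 - p ^ (m + 2))) * a ^ 2 <
      (y / p - 1) * (1 - y) := by
    have hA : p ^ m / (1 - p ^ (m + 1)) * (p ^ (m + 1) / (1 - p ^ (m + 2))) * a ^ 2 =
        (a * p ^ (m + 1)) * (a * p ^ m / ((1 - p ^ (m + 1)) * (1 - p ^ (m + 2)))) := by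
      field_simp
    have hB : a * p ^ m / ((1 - p ^ (m + 1)) * (1 - p ^ (m + 2))) < y - p :=
      (div_lt_iff₀ (mul_pos d1 d2)).mpr hm
    calc _ = _ := hA
      _ < (a * p ^ (m + 1)) * (y - p) := mul_lt_mul_of_pos_left hB (by positivity)
      _ = (y / p - 1) * (a * p ^ (m + 2)) := by field_simp; ring
      _ ≤ (y / p - 1) * (1 - y) := by
        refine mul_le_mul_of_nonneg_left hy1 ?_
        rw [sub_nonneg, le_div_iff₀ hp0]; linarith
  have hcT : eulerCoeff p (m + 2) * a ^ (m + 2) * eulerE p (p * y) =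
      (eulerCoeff p m * a ^ m * eulerE p (p * y)) *
        (p ^ m / (1 - p ^ (m + 1)) * (p ^ (m + 1) / (1 - p ^ (m + 2))) * a ^ 2) := by
    rw [eulerCoeff_succ (m + 1), eulerCoeff_succ m]; ring
  have hfin := mul_lt_mul_of_pos_left hkey hc
  have hE := eulerE_pos hp0 hp1 ha0.le ha1
  have hmul : eulerE p a * ((-1) ^ (m + 2) * besselF p a (y / p ^ (m + 2))) < 0 := by
    have e5 : eulerE p a * ((-1) ^ (m + 2) * besselF p a (y / p ^ (m + 2))) =
        (-1) ^ (m + 2) * ∑ k ∈ Finset.range (m + 2),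
          (-1 : ℝ) ^ k * eulerCoeff p k * a ^ k * eulerE p (p ^ (k + 1) * (y / p ^ (m + 2))) + T := by
      linear_combination (-1 : ℝ) ^ (m + 2) * h + T * hsq
    have e6 : (-1 : ℝ) ^ (m + 2) * ((-1 : ℝ) ^ m * eulerCoeff p m * a ^ m *
        eulerE p (p ^ (m + 1) * (y / p ^ (m + 2)))) =
        -((eulerCoeff p m * a ^ m * eulerE p (p * y)) * ((y / p - 1) * (1 - y))) := by
      rw [e3]
      linear_combination (eulerCoeff p m * a ^ m * eulerE p (p * y) * ((1 - y / p) * (1 - y))) * e4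
    rw [e6] at hle
    rw [e5]
    rw [hcT] at hT
    linarith
  by_contra hcon
  exact absurd (mul_nonneg hE.le (not_lt.mp hcon)) (not_le.mpr hmul)

/-- Sign change of `besselF` across the short interval to the left of `p^(-n)`. -/
lemma eventually_signs (hp0 : 0 < p) (hp1 : p < 1) (ha0 : 0 < a) (ha1 : a < 1) :
    ∀ᶠ n : ℕ in atTop, 0 < (-1) ^ n * besselF p a (1 / p ^ n) ∧
      p < 1 - a * p ^ n / (1 - p ^ (n + 1)) ∧
      (-1) ^ n * besselF p a ((1 - a * p ^ n / (1 - p ^ (n + 1))) / p ^ n) < 0 := by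
  have hpow := tendsto_pow_atTop_nhds_zero_of_lt_one hp0.le hp1
  have hsmall : ∀ᶠ n : ℕ in atTop, p ^ n < (1 - p) ^ 2 :=
    hpow.eventually (gt_mem_nhds (pow_pos (sub_pos.mpr hp1) 2))
  have hY := tendsto_one_sub_ratio (a := a) hp0 hp1
  have hYp : ∀ᶠ n : ℕ in atTop, p < 1 - a * p ^ n / (1 - p ^ (n + 1)) :=
    hY.eventually (lt_mem_nhds hp1)
  have hcond : ∀ᶠ m : ℕ in atTop, a * p ^ m < ((1 - a * p ^ (m + 2) / (1 - p ^ (m + 2 + 1))) - p) *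
      ((1 - p ^ (m + 1)) * (1 - p ^ (m + 2))) := by
    have h1 : Tendsto (fun m : ℕ => a * p ^ m) atTop (nhds 0) := by simpa using hpow.const_mul a
    have h2 := ((tendsto_add_atTop_iff_nat 2).mpr hY).sub_const p
    have h3 := ((tendsto_add_atTop_iff_nat 1).mpr hpow).const_sub 1
    have h4 := ((tendsto_add_atTop_iff_nat 2).mpr hpow).const_sub 1
    have h5 := h2.mul (h3.mul h4)
    exact h1.eventually_lt h5 (by simpa using hp1)
  have hleft : ∀ᶠ n : ℕ in atTop,
      (-1) ^ n * besselF p a ((1 - a * p ^ n / (1 - p ^ (n + 1))) / p ^ n) < 0 := by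
    rw [← map_add_atTop_eq_nat 2, eventually_map]
    filter_upwards [hcond, (tendsto_add_atTop_nat 2).eventually hYp,
      (tendsto_add_atTop_nat 2).eventually hsmall] with m h1 h2 h3
    refine besselF_sign_left hp0 hp1 ha0 ha1 h2 m ?_ h3 h1
    have d := one_sub_pow_succ_pos hp0 hp1 (m + 2)
    have d' : 1 - p ^ (m + 2 + 1) ≤ 1 := by
      have : 0 < p ^ (m + 2 + 1) := by positivity
      linarith
    rw [sub_sub_cancel, le_div_iff₀ d]
    exact mul_le_of_le_one_right (by positivity) d'
  filter_upwards [hsmall, hYp, hleft] with n h1 h2 h3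
  exact ⟨besselF_sign_right hp0 hp1 ha0 ha1 n h1, h2, h3⟩

end Signs

/-! ### Location of the zeros -/

section Zeros

/-- The statement in the variable `x = z²`, for the sequence `X` of all positive zeros. -/
lemma zeros_core {p a : ℝ} (hp0 : 0 < p) (hp1 : p < 1) (ha0 : 0 < a) (ha1 : a < 1) (X : ℕ → ℝ)
    (hzero : ∀ k, 1 ≤ k → besselF p a (X k) = 0)
    (hmono : ∀ k, 1 ≤ k → X k < X (k + 1))
    (hall : ∀ x, 0 < x → besselF p a x = 0 → ∃ k, 1 ≤ k ∧ x = X k)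
    (hloc : ∀ᶠ n : ℕ in atTop, p < p ^ n * X n ∧ p ^ n * X n < 1) :
    ∀ᶠ n : ℕ in atTop, 1 - a * p ^ n / (1 - p ^ (n + 1)) < p ^ n * X n ∧
      X n < p * X (n + 1) := by
  have hcont := besselF_continuous hp0 hp1 ha0 ha1
  have hmono' : ∀ m n : ℕ, 1 ≤ m → m ≤ n → X m ≤ X n := by
    intro m n hm hmn
    induction n, hmn using Nat.le_induction with
    | base => exact le_rfl
    | succ n hn ih => exact ih.trans (hmono n (hm.trans hn)).le
  obtain ⟨N, hN⟩ := eventually_atTop.mp (hloc.and (eventually_signs hp0 hp1 ha0 ha1))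
  -- `X n` is the only zero in `[p^(1-n), p^(-n)]`.
  have huniq : ∀ n, N + 1 ≤ n → ∀ ξ, besselF p a ξ = 0 → p ≤ p ^ n * ξ → p ^ n * ξ ≤ 1 →
      ξ = X n := by
    intro n hn ξ hξ h1 h2
    have hpn : 0 < p ^ n := pow_pos hp0 n
    have hξ0 : 0 < ξ := by
      by_contra hc
      have := mul_nonpos_of_nonneg_of_nonpos hpn.le (not_lt.mp hc)
      linarith
    obtain ⟨m, hm1, rfl⟩ := hall ξ hξ0 hξ
    rcases lt_trichotomy m n with h | h | h
    · exfalso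
      obtain ⟨r, rfl⟩ : ∃ r, n = r + 1 := ⟨n - 1, by omega⟩
      have hle := hmono' m r hm1 (by omega)
      have hr := (hN r (by omega)).1.2
      have h3 : p ^ r * X m ≤ p ^ r * X r := mul_le_mul_of_nonneg_left hle (by positivity)
      rw [pow_succ] at h1
      nlinarith
    · rw [h]
    · exfalso
      have hle := hmono' (n + 1) m (by omega) (by omega)
      have hr := (hN (n + 1) (by omega)).1.1
      have h3 : p ^ n * X (n + 1) ≤ p ^ n * X m := mul_le_mul_of_nonneg_left hle (by positivity)
      rw [pow_succ] at hr
      nlinarith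
  -- A point `u` of `[p^(1-n), p^(-n)]` where the sign is opposite to that at `p^(-n)` lies
  -- to the left of `X n`.
  have hleft : ∀ n, N + 1 ≤ n → ∀ u, p ≤ p ^ n * u → p ^ n * u ≤ 1 →
      (-1) ^ n * besselF p a u < 0 → u < X n := by
    intro n hn u h1 h2 hu
    have hpn : 0 < p ^ n := pow_pos hp0 n
    have hu1 : u ≤ 1 / p ^ n := by rw [le_div_iff₀ hpn]; linarith
    have hg : ContinuousOn (fun x => (-1 : ℝ) ^ n * besselF p a x) (Set.Icc u (1 / p ^ n)) :=
      (continuous_const.mul hcont).continuousOn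
    obtain ⟨ξ, hξ, hξ0⟩ := intermediate_value_Icc hu1 hg
      (Set.mem_Icc.mpr ⟨hu.le, (hN n (by omega)).2.1.le⟩)
    have hF : besselF p a ξ = 0 := by
      simpa using hξ0
    have hξn : ξ = X n := by
      refine huniq n hn ξ hF (h1.trans (by gcongr; exact hξ.1)) ?_
      have := mul_le_mul_of_nonneg_left hξ.2 hpn.le
      rwa [mul_one_div_cancel hpn.ne'] at this
    rw [← hξn]
    refine lt_of_le_of_ne hξ.1 ?_
    rintro rfl
    rw [hF] at hu
    simp at hu
  have hfirst : ∀ n, N + 1 ≤ n → 1 - a * p ^ n / (1 - p ^ (n + 1)) < p ^ n * X n := by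
    intro n hn
    have hpn : 0 < p ^ n := pow_pos hp0 n
    obtain ⟨-, -, h2, h3⟩ := hN n (by omega)
    have hle : 1 - a * p ^ n / (1 - p ^ (n + 1)) ≤ 1 := by
      have := one_sub_pow_succ_pos hp0 hp1 n
      have : 0 < a * p ^ n / (1 - p ^ (n + 1)) := by positivity
      linarith
    have := hleft n hn _ (by rw [mul_div_cancel₀ _ hpn.ne']; exact h2.le)
      (by rw [mul_div_cancel₀ _ hpn.ne']; exact hle) h3
    rw [div_lt_iff₀ hpn] at this
    linarith
  -- The difference equation propagates the inequality from `n` to `n + 1`.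
  have hprop : ∀ n, N + 1 ≤ n → X n < p * X (n + 1) → X (n + 1) < p * X (n + 2) := by
    intro n hn h
    have hpn : 0 < p ^ n := pow_pos hp0 n
    have hl1 := (hN (n + 1) (by omega)).1
    have hl0 := (hN n (by omega)).1
    have e1 : p ^ n * (p * X (n + 1)) = p ^ (n + 1) * X (n + 1) := by ring
    have hs : 0 < (-1) ^ n * besselF p a (p * X (n + 1)) := by
      by_contra hc
      rcases (not_lt.mp hc).lt_or_eq with hc | hc
      · have := hleft n hn _ (by rw [e1]; exact hl1.1.le) (by rw [e1]; exact hl1.2.le) hc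
        linarith
      · have hF : besselF p a (p * X (n + 1)) = 0 := by simpa using hc
        have := huniq n hn _ hF (by rw [e1]; exact hl1.1.le) (by rw [e1]; exact hl1.2.le)
        linarith
    have heq := besselF_eq hp0 hp1 ha0 ha1 (X (n + 1) / p)
    rw [show p * (X (n + 1) / p) = X (n + 1) by field_simp, hzero (n + 1) (by omega),
      show p ^ 2 * (X (n + 1) / p) = p * X (n + 1) by field_simp] at heq
    have hneg : (-1) ^ (n + 2) * besselF p a (X (n + 1) / p) < 0 := by
      have h1 : p * ((-1) ^ (n + 2) * besselF p a (X (n + 1) / p)) =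
          -(a * ((-1) ^ n * besselF p a (p * X (n + 1)))) := by
        rw [pow_add]
        linear_combination (-1 : ℝ) ^ n * heq
      have h2 := mul_pos ha0 hs
      by_contra hc
      have := mul_nonneg hp0.le (not_lt.mp hc)
      linarith
    have e2 : p ^ (n + 2) * (X (n + 1) / p) = p ^ (n + 1) * X (n + 1) := by field_simp; ring
    have := hleft (n + 2) (by omega) _ (by rw [e2]; exact hl1.1.le) (by rw [e2]; exact hl1.2.le)
      hneg
    rw [div_lt_iff₀ hp0] at this
    linarith
  have hexists : ∃ n, N + 1 ≤ n ∧ X n < p * X (n + 1) := by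
    by_contra! hcon
    have hdec : ∀ n, N + 1 ≤ n → p ^ n * X n ≤ p ^ (N + 1) * X (N + 1) := by
      intro n hn
      induction n, hn using Nat.le_induction with
      | base => exact le_rfl
      | succ n hn ih =>
        have h1 := mul_le_mul_of_nonneg_left (hcon n hn) (pow_pos hp0 n).le
        calc p ^ (n + 1) * X (n + 1) = p ^ n * (p * X (n + 1)) := by ring
          _ ≤ p ^ n * X n := h1
          _ ≤ _ := ih
    have hY := tendsto_one_sub_ratio (a := a) hp0 hp1
    have hle : (1 : ℝ) ≤ p ^ (N + 1) * X (N + 1) := by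
      refine le_of_tendsto hY (eventually_atTop.mpr ⟨N + 1, fun n hn => ?_⟩)
      exact (hfirst n hn).le.trans (hdec n hn)
    linarith [(hN (N + 1) (by omega)).1.2]
  obtain ⟨M, hM, hMX⟩ := hexists
  refine eventually_atTop.mpr ⟨M, fun n hn => ⟨hfirst n (hM.trans hn), ?_⟩⟩
  induction n, hn using Nat.le_induction with
  | base => exact hMX
  | succ n hn ih => exact hprop n (hM.trans hn) ih

end Zeros

/-! ### From `qBessel` to `besselF` -/

section Translation

lemma eulerCoeff_mul_qPoch {p : ℝ} (hp0 : 0 < p) (hp1 : p < 1) (q : ℝ) (hq : q ^ 2 = p) (k : ℕ) :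
    eulerCoeff p k * p ^ k * qPoch p p k = q ^ (k * (k + 1)) := by
  induction k with
  | zero => simp [eulerCoeff, qPoch]
  | succ k ih =>
    have h := (one_sub_pow_succ_pos hp0 hp1 k).ne'
    have e : q ^ ((k + 1) * (k + 1 + 1)) = q ^ (k * (k + 1)) * p ^ (k + 1) := by
      rw [← hq, ← pow_mul, ← pow_add]; congr 1; ring
    rw [eulerCoeff_succ, qPoch_succ, e, ← ih, show 1 - p * p ^ k = 1 - p ^ (k + 1) by ring]
    field_simp

lemma qBessel_eq {q ν : ℝ} (hq0 : 0 < q) (hq1 : q < 1) (z : ℝ) :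
    qBessel ν q z = z ^ ν *
      (qPochInf (q ^ (2 * (ν + 1))) (q ^ 2) / qPochInf (q ^ 2) (q ^ 2)) *
        besselF (q ^ 2) (q ^ (2 * (ν + 1))) (z ^ 2) := by
  have hp0 : 0 < q ^ 2 := by positivity
  have hp1 : q ^ 2 < 1 := pow_lt_one₀ hq0.le hq1 two_ne_zero
  unfold qBessel besselF
  congr 1
  refine tsum_congr fun k => ?_
  have h1 := (qPoch_pos hp0 hp1 hp0 hp1 k).ne'
  rw [← eulerCoeff_mul_qPoch hp0 hp1 q rfl k, mul_pow (q ^ 2) (z ^ 2), pow_mul z]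
  generalize qPoch (q ^ (2 * (ν + 1))) (q ^ 2) k = D
  rw [div_mul_eq_div_div_swap]
  congr 1
  field_simp

end Translation

theorem stmt7 (q ν : ℝ) (hq0 : 0 < q) (hq1 : q < 1) (hν : -1 < ν)
    (j : ℕ → ℝ)
    (hjpos : ∀ k, 1 ≤ k → 0 < j k)
    (hjzero : ∀ k, 1 ≤ k → qBessel ν q (j k) = 0)
    (hjmono : ∀ k, 1 ≤ k → j k < j (k + 1))
    (hjall : ∀ x, 0 < x → qBessel ν q x = 0 → ∃ k, 1 ≤ k ∧ x = j k)
    (hε : ∃ K : ℕ, ∀ k, K ≤ k →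
      0 < (k : ℝ) + Real.log (j k) / Real.log q ∧
      (k : ℝ) + Real.log (j k) / Real.log q <
        Real.log (1 - q ^ (2 * ((k : ℝ) + ν)) / (1 - q ^ (2 * (k : ℝ)))) / (2 * Real.log q))
    :
    ∃ K : ℕ, ∀ k, K ≤ k →
      q ^ (-(k : ℝ) - 1 +
          Real.log (1 - q ^ (2 * ((k : ℝ) + 1 + ν)) / (1 - q ^ (2 * ((k : ℝ) + 1)))) /
            (2 * Real.log q)) < j k / q ∧
      j k / q < j (k + 1) := by
  have hp0 : 0 < q ^ 2 := by positivity
  have hp1 : q ^ 2 < 1 := pow_lt_one₀ hq0.le hq1 two_ne_zero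
  set p := q ^ 2 with hp
  set a := q ^ (2 * (ν + 1)) with ha
  have ha0 : 0 < a := Real.rpow_pos_of_pos hq0 _
  have ha1 : a < 1 := Real.rpow_lt_one hq0.le hq1 (by linarith)
  have hlq : Real.log q < 0 := Real.log_neg hq0 hq1
  have hjmono' : ∀ n : ℕ, 1 ≤ n → j 1 ≤ j n := by
    intro n hn
    induction n, hn using Nat.le_induction with
    | base => exact le_rfl
    | succ n hn ih => exact ih.trans (hjmono n hn).le
  -- If the prefactor vanished, every positive number would be a zero, in particular `j 1 / 2`.
  have hC : qPochInf a p / qPochInf p p ≠ 0 := by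
    intro hC
    have h1 := hjpos 1 le_rfl
    obtain ⟨k, hk, hk'⟩ := hjall (j 1 / 2) (by linarith) (by
      rw [qBessel_eq hq0 hq1, ← hp, ← ha, hC]; ring)
    linarith [hjmono' k hk]
  have hiff : ∀ z, 0 < z → (qBessel ν q z = 0 ↔ besselF p a (z ^ 2) = 0) := by
    intro z hz
    rw [qBessel_eq hq0 hq1, ← hp, ← ha]
    simp [(Real.rpow_pos_of_pos hz ν).ne', hC]
  -- The real powers in the definition of `α` in terms of `p` and `a`.
  have hpow1 : ∀ n : ℕ, q ^ (2 * ((n : ℝ) + 1)) = p ^ (n + 1) := by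
    intro n
    rw [hp, ← pow_mul, ← Real.rpow_natCast]; push_cast; ring_nf
  have hpow2 : ∀ n : ℕ, q ^ (2 * ((n : ℝ) + 1 + ν)) = a * p ^ n := by
    intro n
    rw [hp, ha, ← pow_mul, ← Real.rpow_natCast, ← Real.rpow_add hq0]; push_cast; ring_nf
  have hY := tendsto_one_sub_ratio (a := a) hp0 hp1
  have hYp := hY.eventually (lt_mem_nhds hp1)
  have hlogX : ∀ n : ℕ, 1 ≤ n →
      Real.log (p ^ n * j n ^ 2) = 2 * (n * Real.log q + Real.log (j n)) := by
    intro n hn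
    have := hjpos n hn
    rw [Real.log_mul (by positivity) (by positivity), Real.log_pow, Real.log_pow, Real.log_pow]
    push_cast
    ring
  have hloc : ∀ᶠ n : ℕ in atTop, p < p ^ n * j n ^ 2 ∧ p ^ n * j n ^ 2 < 1 := by
    obtain ⟨K, hK⟩ := hε
    rw [← map_add_atTop_eq_nat 1, eventually_map]
    filter_upwards [hYp, eventually_ge_atTop K] with n hn hKn
    have hj := hjpos (n + 1) (by omega)
    obtain ⟨h1, h2⟩ := hK (n + 1) (by omega)
    push_cast at h1 h2
    rw [hpow1, hpow2] at h2
    have hX : 0 < p ^ (n + 1) * j (n + 1) ^ 2 := by positivity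
    have hl := hlogX (n + 1) (by omega)
    push_cast at hl
    have e1 : Real.log (j (n + 1)) / Real.log q * Real.log q = Real.log (j (n + 1)) :=
      div_mul_cancel₀ _ hlq.ne
    constructor
    · refine hn.trans ((Real.log_lt_log_iff (hp0.trans hn) hX).mp ?_)
      have h3 := mul_lt_mul_of_neg_right h2 hlq
      have e2 : ∀ L : ℝ, L / (2 * Real.log q) * Real.log q = L / 2 := by
        intro L; have := hlq.ne; field_simp
      rw [e2, add_mul, e1] at h3
      linarith
    · refine (Real.log_neg_iff hX).mp ?_
      have h3 := mul_neg_of_pos_of_neg h1 hlq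
      rw [add_mul, e1] at h3
      linarith
  have hcore := zeros_core hp0 hp1 ha0 ha1 (fun n => j n ^ 2)
    (fun k hk => (hiff _ (hjpos k hk)).mp (hjzero k hk))
    (fun k hk => pow_lt_pow_left₀ (hjmono k hk) (hjpos k hk).le two_ne_zero)
    (by
      intro x hx hF
      obtain ⟨k, hk, hk'⟩ := hjall (Real.sqrt x) (Real.sqrt_pos.mpr hx)
        ((hiff _ (Real.sqrt_pos.mpr hx)).mpr (by rwa [Real.sq_sqrt hx.le]))
      exact ⟨k, hk, by rw [← hk', Real.sq_sqrt hx.le]⟩)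
    hloc
  obtain ⟨K, hK⟩ := eventually_atTop.mp (hcore.and (hYp.and (eventually_ge_atTop 1)))
  refine ⟨K, fun k hk => ?_⟩
  obtain ⟨⟨h1, h2⟩, h3, hk1⟩ := hK k hk
  have hj := hjpos k hk1
  have hj' := hjpos (k + 1) (by omega)
  constructor
  · rw [hpow1, hpow2, ← Real.log_lt_log_iff (Real.rpow_pos_of_pos hq0 _) (by positivity),
      Real.log_rpow hq0, Real.log_div hj.ne' hq0.ne']
    have h4 := Real.log_lt_log (hp0.trans h3) h1
    rw [hlogX k hk1] at h4
    have e2 : ∀ L : ℝ, L / (2 * Real.log q) * Real.log q = L / 2 := by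
      intro L; have := hlq.ne; field_simp
    rw [add_mul, e2]
    linarith
  · rw [div_lt_iff₀ hq0]
    refine lt_of_pow_lt_pow_left₀ 2 (by positivity) ?_
    calc j k ^ 2 < p * j (k + 1) ^ 2 := h2
      _ = (j (k + 1) * q) ^ 2 := by rw [hp]; ring
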